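/- arXiv:1804.09191 — 3 statements merged into one kernel-verified Lean document; each statement's English description precedes it below -/
import Mathlib

section
/- Suppose u, v ∈ B = ℂ[x,y] generate B as a ℂ-algebra. Let a, b ≥ 1 be relatively prime integers, let k ≥ 1, let g be a univariate polynomial over ℂ of degree at most k−1 with g(0) = 1, and set P = vᵃ − (u·vᵏ + g(v))ᵇ. If all coefficients of P are real (so P ∈ A = ℝ[x,y]) and every unit of A/PA is the residue class of a nonzero real constant, then b = 1 and k = 1, and writing v = v₁ + i·v₂ with v₁, v₂ ∈ A, there exists a nonzero real number λ such that P = λ(v₁² + v₂²) − 1 and v₁, v₂ generate ℝ[x,y] as an ℝ-algebra (so P defines the standard embedding of S¹ in ℝ²). -/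
/-!
Write `v̄` for the polynomial with conjugate coefficients. Since `v ∣ P + 1`, the polynomial `v` is
invertible modulo `P`, so the norm `N = v * v̄ = v₁ ^ 2 + v₂ ^ 2` is a unit of `A/PA`, and the
hypothesis on units gives `P ∣ N - c` with a real `c ≠ 0`. On the other hand `v` and `v̄` are primes of
`ℂ[x,y]` (each is a member of a generating pair) that both divide `P + 1`, and they are not
associate, because otherwise `v` would take at most two values on the curve `P = 0`. So `N ∣ P + 1`,
and comparing degrees in these two divisibilities yields `P + 1 = lam * N` (`real_part`).

Restricted to the line `v̄ = 0`, the equation `P + 1 = lam * v * v̄` becomes `V ^ a + 1 = W ^ b` in a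
polynomial ring in one variable, with `V ∣ W - 1`. A degree and derivative argument
(`constants_of_pow_eq`) then forces `b = 1` (`b_eq_one`). If `k ≥ 2`, the same equation divided by
`v` makes `v̄` an affine function of `v`, which is impossible (`k_eq_one`). For `b = k = 1` it reads
`lam * v̄ = v ^ (a - 1) - u`, so `v` and `v̄` generate `ℂ[x,y]`, hence so do `v₁` and `v₂`; taking real
parts, `v₁` and `v₂` generate `ℝ[x,y]`.
-/

open MvPolynomial

/-! ### Coordinate systems of the complex plane -/

/-- The kernels of the iterates of `f` form an ascending chain of ideals, which stabilizes. -/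
theorem injective_of_surjective_ringHom {R : Type*} [CommRing R] [IsNoetherianRing R]
    (f : R →+* R) (hf : Function.Surjective f) : Function.Injective f := by
  have hmono : Monotone fun n : ℕ => RingHom.ker (f ^ n) := by
    refine monotone_nat_of_le_succ fun n x hx => ?_
    rw [RingHom.mem_ker, RingHom.coe_pow] at hx ⊢
    rw [Function.iterate_succ_apply', hx, map_zero]
  obtain ⟨n, hn⟩ := monotone_stabilizes_iff_noetherian.mpr ‹IsNoetherianRing R› ⟨_, hmono⟩
  rw [injective_iff_map_eq_zero]
  intro x hx
  obtain ⟨y, rfl⟩ := hf.iterate n x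
  have h : y ∈ RingHom.ker (f ^ (n + 1)) := by
    rw [RingHom.mem_ker, RingHom.coe_pow, Function.iterate_succ_apply', hx]
  have hy : y ∈ RingHom.ker (f ^ n) := by
    have e := hn (n + 1) (Nat.le_succ n)
    simp only [OrderHom.coe_mk] at e
    rwa [e]
  rwa [RingHom.mem_ker, RingHom.coe_pow] at hy

/-- A generating pair `u, v` of `ℂ[x,y]` is a coordinate system, so its two members can be sent to
arbitrary elements of any commutative `ℂ`-algebra. -/
theorem exists_algHom (u v : MvPolynomial (Fin 2) ℂ)
    (huv : Algebra.adjoin ℂ {u, v} = ⊤) {R : Type*} [CommRing R] [Algebra ℂ R] (r s : R) :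
    ∃ ψ : MvPolynomial (Fin 2) ℂ →ₐ[ℂ] R, ψ u = r ∧ ψ v = s := by
  have hsurj : Function.Surjective (aeval ![u, v] : MvPolynomial (Fin 2) ℂ →ₐ[ℂ] _) := by
    rw [← AlgHom.range_eq_top, ← Algebra.adjoin_range_eq_range_aeval, ← huv]
    congr 1
    ext z; simp [eq_comm, or_comm]
  have hinj := injective_of_surjective_ringHom
    (aeval ![u, v] : MvPolynomial (Fin 2) ℂ →ₐ[ℂ] _).toRingHom hsurj
  let e := AlgEquiv.ofBijective (aeval ![u, v] : MvPolynomial (Fin 2) ℂ →ₐ[ℂ] _) ⟨hinj, hsurj⟩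
  have hu : e.symm u = X 0 := by
    rw [AlgEquiv.symm_apply_eq]; simp [e]
  have hv : e.symm v = X 1 := by
    rw [AlgEquiv.symm_apply_eq]; simp [e]
  refine ⟨(aeval ![r, s]).comp e.symm.toAlgHom, ?_, ?_⟩
  · simp [hu]
  · simp [hv]

/-- Restriction to the line `v = 0`: the quotient of `ℂ[x,y]` by a coordinate `v` is a polynomial
ring in the image of `u`. -/
theorem exists_restriction (u v : MvPolynomial (Fin 2) ℂ)
    (huv : Algebra.adjoin ℂ {u, v} = ⊤) :
    ∃ φ : MvPolynomial (Fin 2) ℂ →ₐ[ℂ] Polynomial ℂ,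
      φ u = Polynomial.X ∧ φ v = 0 ∧ ∀ f, φ f = 0 → v ∣ f := by
  obtain ⟨φ, hu, hv⟩ := exists_algHom u v huv (Polynomial.X : Polynomial ℂ) 0
  refine ⟨φ, hu, hv, fun f hf => ?_⟩
  have key : Ideal.Quotient.mkₐ ℂ (Ideal.span {v}) =
      ((Ideal.Quotient.mkₐ ℂ (Ideal.span {v})).comp (Polynomial.aeval u)).comp φ := by
    refine AlgHom.ext_of_adjoin_eq_top huv ?_
    rintro x (rfl | rfl)
    · simp [hu]
    · simp [hv]
  have := DFunLike.congr_fun key f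
  simpa [hf, Ideal.Quotient.eq_zero_iff_mem, Ideal.mem_span_singleton] using this

theorem prime_coord (u v : MvPolynomial (Fin 2) ℂ)
    (huv : Algebra.adjoin ℂ {u, v} = ⊤) : Prime v := by
  obtain ⟨φ, -, hv, hker⟩ := exists_restriction u v huv
  refine ⟨?_, ?_, ?_⟩
  · rintro rfl
    obtain ⟨ψ, -, h⟩ := exists_algHom u 0 huv (0 : ℂ) 1
    simp at h
  · intro h
    have := h.map φ
    simp [hv] at this
  · rintro p q ⟨t, ht⟩
    have h : φ p * φ q = 0 := by rw [← map_mul, ht, map_mul, hv, zero_mul]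
    exact (mul_eq_zero.mp h).imp (hker p) (hker q)

/-! ### Real polynomials and conjugation -/

/-- Real and imaginary parts of an element of a subalgebra generated over `ℂ` by real polynomials
lie in the `ℝ`-subalgebra with the same generators. -/
theorem decompose (s : Set (MvPolynomial (Fin 2) ℝ)) (f : MvPolynomial (Fin 2) ℂ)
    (hf : f ∈ Algebra.adjoin ℂ (map (algebraMap ℝ ℂ) '' s)) :
    ∃ p ∈ Algebra.adjoin ℝ s, ∃ q ∈ Algebra.adjoin ℝ s,
      f = map (algebraMap ℝ ℂ) p + C Complex.I * map (algebraMap ℝ ℂ) q := by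
  induction hf using Algebra.adjoin_induction with
  | mem x hx =>
    obtain ⟨p, hp, rfl⟩ := hx
    exact ⟨p, Algebra.subset_adjoin hp, 0, zero_mem _, by simp⟩
  | algebraMap r =>
    refine ⟨_, algebraMap_mem _ r.re, _, algebraMap_mem _ r.im, ?_⟩
    simp only [algebraMap_eq, map_C, ← C_mul, ← C_add]
    congr 1
    rw [mul_comm]; exact (Complex.re_add_im r).symm
  | add x y _ _ hx hy =>
    obtain ⟨p, hp, q, hq, rfl⟩ := hx
    obtain ⟨p', hp', q', hq', rfl⟩ := hy
    exact ⟨p + p', add_mem hp hp', q + q', add_mem hq hq', by simp only [map_add]; ring⟩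
  | mul x y _ _ hx hy =>
    obtain ⟨p, hp, q, hq, rfl⟩ := hx
    obtain ⟨p', hp', q', hq', rfl⟩ := hy
    refine ⟨p * p' - q * q', sub_mem (mul_mem hp hp') (mul_mem hq hq'),
      p * q' + q * p', add_mem (mul_mem hp hq') (mul_mem hq hp'), ?_⟩
    have hI : (C Complex.I : MvPolynomial (Fin 2) ℂ) * C Complex.I = -1 := by
      rw [← C_mul, Complex.I_mul_I]; simp
    simp only [map_add, map_sub, map_mul]
    linear_combination (map (algebraMap ℝ ℂ) q * map (algebraMap ℝ ℂ) q') * hI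

theorem exists_re_im (f : MvPolynomial (Fin 2) ℂ) : ∃ p q,
    f = map (algebraMap ℝ ℂ) p + C Complex.I * map (algebraMap ℝ ℂ) q := by
  obtain ⟨p, -, q, -, h⟩ := decompose (Set.range X) f (by
    have : (map (algebraMap ℝ ℂ) '' (Set.range (X : Fin 2 → MvPolynomial (Fin 2) ℝ)))
      = Set.range X := by
      rw [← Set.range_comp]; congr 1; ext; simp
    rw [this, MvPolynomial.adjoin_range_X]; trivial)
  exact ⟨p, q, h⟩

theorem re_eq (x p q : MvPolynomial (Fin 2) ℝ) (h : map (algebraMap ℝ ℂ) x =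
    map (algebraMap ℝ ℂ) p + C Complex.I * map (algebraMap ℝ ℂ) q) : x = p := by
  ext m
  have := congrArg (fun f => (coeff m f).re) h
  simpa [coeff_map, coeff_C_mul] using this

theorem conj_conj (f : MvPolynomial (Fin 2) ℂ) :
    map (starRingEnd ℂ) (map (starRingEnd ℂ) f) = f := by
  ext m; simp [coeff_map]

theorem conj_real (p : MvPolynomial (Fin 2) ℝ) :
    map (starRingEnd ℂ) (map (algebraMap ℝ ℂ) p) = map (algebraMap ℝ ℂ) p := by
  ext m; simp [coeff_map]

theorem exists_real_of_conj (f : MvPolynomial (Fin 2) ℂ) (h : map (starRingEnd ℂ) f = f) :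
    ∃ p, f = map (algebraMap ℝ ℂ) p := by
  obtain ⟨p, q, rfl⟩ := exists_re_im f
  refine ⟨p, ?_⟩
  simp only [map_add, map_mul, conj_real, map_C, Complex.conj_I] at h
  have h2 : (C (2 * Complex.I) : MvPolynomial (Fin 2) ℂ) * map (algebraMap ℝ ℂ) q = 0 := by
    simp only [C_neg, C_mul, show (C 2 : MvPolynomial (Fin 2) ℂ) = 2 from rfl] at h ⊢
    linear_combination -h
  have h3 : map (algebraMap ℝ ℂ) q = 0 := by
    rcases mul_eq_zero.mp h2 with h | h
    · simp at h
    · exact h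
  rw [h3]; simp

theorem adjoin_conj (u v : MvPolynomial (Fin 2) ℂ)
    (huv : Algebra.adjoin ℂ {u, v} = ⊤) :
    Algebra.adjoin ℂ {map (starRingEnd ℂ) u, map (starRingEnd ℂ) v} = ⊤ := by
  rw [eq_top_iff]
  rintro f -
  have key : ∀ f ∈ Algebra.adjoin ℂ {u, v}, map (starRingEnd ℂ) f ∈
      Algebra.adjoin ℂ {map (starRingEnd ℂ) u, map (starRingEnd ℂ) v} := by
    intro f hf
    induction hf using Algebra.adjoin_induction with
    | mem x hx =>
      apply Algebra.subset_adjoin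
      rcases hx with rfl | rfl <;> simp
    | algebraMap r => 
      rw [algebraMap_eq, map_C]
      exact algebraMap_mem _ _
    | add x y _ _ hx hy => rw [map_add]; exact add_mem hx hy
    | mul x y _ _ hx hy => rw [map_mul]; exact mul_mem hx hy
  rw [← conj_conj f]
  exact key _ (by rw [huv]; trivial)

/-! ### A polynomial equation in one variable -/

open Polynomial in
/-- If `V ^ a + 1 = W ^ b` with `b ≥ 2` and `V ∣ W - 1`, then `V` and `W` are constant. For
nonconstant `W` the divisibility gives `deg V ≤ deg W`, while differentiating the equation and
using the coprimality of `V` and `W` gives that `W` divides the derivative of `V`,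
hence `deg W < deg V`. -/
theorem constants_of_pow_eq (V W : ℂ[X]) (a b : ℕ) (ha : 1 ≤ a) (hb : 2 ≤ b)
    (h : V ^ a + 1 = W ^ b) (hd : V ∣ W - 1) : V.natDegree = 0 ∧ W.natDegree = 0 := by
  have hW : W.natDegree = 0 := by
    by_contra hW
    have hW0 : W ≠ 0 := by rintro rfl; simp at hW
    have hW' : derivative W ≠ 0 := fun h0 => hW (derivative_eq_zero.mp h0)
    have hW1 : W - 1 ≠ 0 := by
      intro h0; rw [sub_eq_zero] at h0; subst h0; simp at hW
    have hle : V.natDegree ≤ W.natDegree := by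
      have := natDegree_le_of_dvd hd hW1
      rwa [show W - 1 = W - Polynomial.C 1 by simp, natDegree_sub_C] at this
    have hder := congrArg derivative h
    simp only [derivative_add, derivative_pow, derivative_one, add_zero] at hder
    have hcop : IsCoprime W V := by
      obtain ⟨t, ht⟩ := hd
      exact ⟨1, -t, by linear_combination ht⟩
    have hbne : (Polynomial.C (b : ℂ) : ℂ[X]) ≠ 0 := by
      rw [Ne, Polynomial.C_eq_zero]; exact_mod_cast (by omega : b ≠ 0)
    have haU : IsUnit (Polynomial.C (a : ℂ) : ℂ[X]) := by
      rw [isUnit_C]; exact (Nat.cast_ne_zero.mpr (by omega)).isUnit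
    have hV' : derivative V ≠ 0 := by
      intro h0
      rw [h0, mul_zero] at hder
      exact mul_ne_zero (mul_ne_zero hbne (pow_ne_zero _ hW0)) hW' hder.symm
    have hdv : W ∣ derivative V := by
      have h1 : W ∣ Polynomial.C (a : ℂ) * V ^ (a - 1) * derivative V := by
        rw [hder]
        exact ((dvd_pow_self W (by omega)).mul_left _).mul_right _
      have h2 : W ∣ V ^ (a - 1) * derivative V := by
        rw [mul_assoc] at h1
        exact haU.dvd_mul_left.mp h1
      exact (hcop.pow_right).dvd_of_dvd_mul_left h2
    have h3 := natDegree_le_of_dvd hdv hV'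
    have hVn : V.natDegree ≠ 0 := by
      intro h0
      rw [natDegree_eq_zero] at h0
      obtain ⟨c, rfl⟩ := h0
      simp at hV'
    have h4 := natDegree_derivative_lt hVn
    omega
  refine ⟨?_, hW⟩
  have := congrArg natDegree h
  rw [show (1 : ℂ[X]) = Polynomial.C 1 by simp, natDegree_add_C, natDegree_pow, natDegree_pow, hW,
    mul_zero] at this
  rcases mul_eq_zero.mp this with h | h
  · omega
  · exact h

/-! ### The curve `P = 0` -/

/-- If `P₀` has the given form over `ℂ` and `A/P₀A` has only constant units, then `v` and its
conjugate are not associate and `P₀ + 1` is a nonzero real multiple of the norm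
`v * v̄ = v₁ ^ 2 + v₂ ^ 2`. -/
theorem real_part (u v : MvPolynomial (Fin 2) ℂ)
    (huv : Algebra.adjoin ℂ {u, v} = ⊤)
    (a b : ℕ) (ha : 1 ≤ a) (hb : 1 ≤ b) (k : ℕ) (hk : 1 ≤ k)
    (g : Polynomial ℂ) (hg0 : Polynomial.eval 0 g = 1)
    (P₀ v₁ v₂ : MvPolynomial (Fin 2) ℝ)
    (hP : map (algebraMap ℝ ℂ) P₀ = v ^ a - (u * v ^ k + Polynomial.aeval v g) ^ b)
    (hunits : ∀ w : (MvPolynomial (Fin 2) ℝ ⧸ Ideal.span {P₀})ˣ,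
      ∃ r : ℝ, r ≠ 0 ∧ (w : MvPolynomial (Fin 2) ℝ ⧸ Ideal.span {P₀}) =
        algebraMap ℝ (MvPolynomial (Fin 2) ℝ ⧸ Ideal.span {P₀}) r)
    (hv : v = map (algebraMap ℝ ℂ) v₁ + C Complex.I * map (algebraMap ℝ ℂ) v₂) :
    ¬ v ∣ map (starRingEnd ℂ) v ∧
      ∃ lam : ℝ, lam ≠ 0 ∧ P₀ = C lam * (v₁ ^ 2 + v₂ ^ 2) - 1 := by
  have hinj : Function.Injective (map (algebraMap ℝ ℂ) : MvPolynomial (Fin 2) ℝ →+* _) :=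
    map_injective _ (algebraMap ℝ ℂ).injective
  have norm_eq : ∀ p q : MvPolynomial (Fin 2) ℝ,
      (map (algebraMap ℝ ℂ) p + C Complex.I * map (algebraMap ℝ ℂ) q) *
        map (starRingEnd ℂ) (map (algebraMap ℝ ℂ) p + C Complex.I * map (algebraMap ℝ ℂ) q) =
      map (algebraMap ℝ ℂ) (p ^ 2 + q ^ 2) := by
    intro p q
    have hI : (C Complex.I : MvPolynomial (Fin 2) ℂ) * C Complex.I = -1 := by
      rw [← C_mul, Complex.I_mul_I]; simp
    simp only [map_add, map_mul, map_pow, conj_real, map_C, Complex.conj_I, C_neg]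
    linear_combination (-(map (algebraMap ℝ ℂ) q) ^ 2) * hI
  have hN : v * map (starRingEnd ℂ) v = map (algebraMap ℝ ℂ) (v₁ ^ 2 + v₂ ^ 2) := by
    rw [← norm_eq, ← hv]
  have hPconj : map (starRingEnd ℂ) (map (algebraMap ℝ ℂ) P₀) = map (algebraMap ℝ ℂ) P₀ :=
    conj_real P₀
  set N := v₁ ^ 2 + v₂ ^ 2 with hNdef
  have hvP : v ∣ map (algebraMap ℝ ℂ) P₀ + 1 := by
    have h1 : v ∣ Polynomial.aeval v g - 1 := by
      have h : Polynomial.X ∣ g - 1 := by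
        rw [Polynomial.X_dvd_iff, Polynomial.coeff_zero_eq_eval_zero]; simp [hg0]
      simpa using map_dvd (Polynomial.aeval v) h
    have h2 : v ∣ (u * v ^ k + Polynomial.aeval v g) - 1 := by
      rw [add_sub_assoc]
      exact dvd_add ((dvd_pow_self v (by omega)).mul_left u) h1
    have h3 : v ∣ (u * v ^ k + Polynomial.aeval v g) ^ b - 1 := by
      have := sub_dvd_pow_sub_pow (u * v ^ k + Polynomial.aeval v g) 1 b
      rw [one_pow] at this
      exact h2.trans this
    rw [hP, sub_add]
    exact dvd_sub (dvd_pow_self v (by omega)) h3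
  -- The curve `P = 0` has a point over every nonzero value of `v`.
  have hpt : ∀ v₀ : ℂ, v₀ ≠ 0 → ∃ ψ : MvPolynomial (Fin 2) ℂ →ₐ[ℂ] ℂ, ψ v = v₀ ∧
      ψ (map (algebraMap ℝ ℂ) P₀) = 0 := by
    intro v₀ hv₀
    obtain ⟨w, hw⟩ := IsAlgClosed.exists_pow_nat_eq (v₀ ^ a) (show 0 < b by omega)
    obtain ⟨ψ, hu', hv'⟩ := exists_algHom u v huv ((w - Polynomial.eval v₀ g) / v₀ ^ k) v₀
    refine ⟨ψ, hv', ?_⟩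
    have hg' : ψ (Polynomial.aeval v g) = Polynomial.eval v₀ g := by
      rw [← Polynomial.aeval_algHom_apply, hv', Polynomial.coe_aeval_eq_eval]
    rw [hP, map_sub, map_pow, map_pow, map_add, map_mul, map_pow, hg', hu', hv',
      div_mul_cancel₀ _ (pow_ne_zero _ hv₀), sub_add_cancel, hw, sub_self]
  -- Modulo `P₀` the polynomial `v` divides `-1`, so the norm `N` is a unit of `A/P₀A`.
  obtain ⟨c, hc, Q, hQ⟩ : ∃ c : ℝ, c ≠ 0 ∧ P₀ ∣ N - C c := by
    obtain ⟨r, hr⟩ := hvP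
    obtain ⟨r₁, r₂, hr12⟩ := exists_re_im r
    have hsq : (P₀ + 1) ^ 2 = N * (r₁ ^ 2 + r₂ ^ 2) := by
      apply hinj
      rw [map_mul, ← hN, ← norm_eq r₁ r₂, ← hr12, map_pow, map_add, map_one]
      have hr' := congrArg (map (starRingEnd ℂ)) hr
      rw [map_add, hPconj, map_one, map_mul] at hr'
      rw [sq]
      nth_rewrite 1 [hr]
      rw [hr']; ring
    have hunit : Ideal.Quotient.mk (Ideal.span {P₀}) N *
        Ideal.Quotient.mk (Ideal.span {P₀}) (r₁ ^ 2 + r₂ ^ 2) = 1 := by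
      have h0 : Ideal.Quotient.mk (Ideal.span {P₀}) P₀ = 0 := by
        rw [Ideal.Quotient.eq_zero_iff_mem]; exact Ideal.mem_span_singleton_self _
      rw [← map_mul, ← hsq]; simp [h0]
    obtain ⟨c, hc, h⟩ := hunits (Units.mkOfMulEqOne _ _ hunit)
    refine ⟨c, hc, ?_⟩
    rw [← Ideal.mem_span_singleton, ← Ideal.Quotient.eq]
    exact h
  have hNpt : ∀ ψ : MvPolynomial (Fin 2) ℂ →ₐ[ℂ] ℂ, ψ (map (algebraMap ℝ ℂ) P₀) = 0 →
      ψ v * ψ (map (starRingEnd ℂ) v) = c := by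
    intro ψ h
    have := congrArg (fun x => ψ (map (algebraMap ℝ ℂ) x)) hQ
    simp only [map_sub, map_mul, map_C, ← hN, h, zero_mul] at this
    have hC : ψ (C ((algebraMap ℝ ℂ) c)) = c := ψ.commutes _
    rw [hC] at this
    exact sub_eq_zero.mp this
  have hprime := prime_coord u v huv
  have hprime' := prime_coord _ _ (adjoin_conj u v huv)
  have hndvd : ¬ v ∣ map (starRingEnd ℂ) v := by
    rintro ⟨t, ht⟩
    have htbar := congrArg (map (starRingEnd ℂ)) ht
    rw [conj_conj, map_mul, ht, mul_assoc] at htbar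
    -- Conjugation makes `t` a unit, so `v̄ = m * v` and `m * v ^ 2 = c` along the curve, although
    -- `v` takes all nonzero values there.
    have htu : IsUnit t := by
      refine IsUnit.of_mul_eq_one (map (starRingEnd ℂ) t) ?_
      apply mul_left_cancel₀ hprime.ne_zero
      rw [← htbar, mul_one]
    obtain ⟨m, -, rfl⟩ := (MvPolynomial.isUnit_iff_eq_C_of_isReduced).mp htu
    have h : ∀ v₀ : ℂ, v₀ ≠ 0 → v₀ * (v₀ * m) = c := by
      intro v₀ hv₀
      obtain ⟨ψ, h1, h2⟩ := hpt v₀ hv₀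
      have h3 := hNpt ψ h2
      have hC : ψ (C m) = m := ψ.commutes _
      rwa [ht, map_mul, hC, h1] at h3
    have h1 := h 1 one_ne_zero
    have h2 := h 2 two_ne_zero
    have : (c : ℂ) = 0 := by linear_combination (4 * h1 - h2) / (-3 : ℂ) 
    exact hc (by exact_mod_cast this)
  refine ⟨hndvd, ?_⟩
  obtain ⟨R, hR⟩ : ∃ R, P₀ + 1 = N * R := by
    have hvP' : map (starRingEnd ℂ) v ∣ map (algebraMap ℝ ℂ) P₀ + 1 := by
      have := map_dvd (map (starRingEnd ℂ)) hvP
      rwa [map_add, map_one, hPconj] at this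
    obtain ⟨s, hs⟩ := hvP'
    rw [hs] at hvP
    obtain ⟨R, rfl⟩ := (hprime.dvd_or_dvd hvP).resolve_left hndvd
    have hs1 : map (algebraMap ℝ ℂ) (P₀ + 1) = map (algebraMap ℝ ℂ) N * R := by
      rw [map_add, map_one, hs, ← hN]; ring
    have hRc : map (starRingEnd ℂ) R = R := by
      have h := congrArg (map (starRingEnd ℂ)) hs1
      rw [map_mul, conj_real, conj_real, hs1] at h
      refine (mul_left_cancel₀ ?_ h).symm
      rw [← hN]
      exact mul_ne_zero hprime.ne_zero hprime'.ne_zero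
    obtain ⟨R₀, rfl⟩ := exists_real_of_conj R hRc
    exact ⟨R₀, hinj (by rw [hs1, map_mul])⟩
  have hP1 : P₀ + 1 ≠ 0 := by
    intro h
    obtain ⟨ψ, -, h2⟩ := hpt 1 one_ne_zero
    rw [eq_neg_of_add_eq_zero_left h] at h2
    simp at h2
  have hN0 : N ≠ 0 := by rintro h; rw [h, zero_mul] at hR; exact hP1 hR
  have hR0 : R ≠ 0 := by rintro h; rw [h, mul_zero] at hR; exact hP1 hR
  have hNc : N - C c ≠ 0 := by
    intro h
    obtain ⟨ψ, -, h0⟩ := exists_algHom u v huv (0 : ℂ) 0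
    have h1 := congrArg (fun x => ψ (map (algebraMap ℝ ℂ) x)) h
    have hC : ψ (C ((algebraMap ℝ ℂ) c)) = c := ψ.commutes _
    simp only [map_sub, map_C, ← hN, map_mul, h0, zero_mul, hC, map_zero, zero_sub] at h1
    rw [neg_eq_zero] at h1
    exact hc (by exact_mod_cast h1)
  have hP0 : P₀ ≠ 0 := by rintro h; rw [h, zero_mul] at hQ; exact hNc hQ
  have hQ0 : Q ≠ 0 := by rintro h; rw [h, mul_zero] at hQ; exact hNc hQ
  -- `deg N + deg R ≤ deg P₀` from `P₀ + 1 = N * R`, and `deg P₀ ≤ deg N` from `P₀ ∣ N - c`.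
  have hdeg : R.totalDegree = 0 := by
    have h1 := congrArg totalDegree hQ
    have h2 := congrArg totalDegree hR
    rw [totalDegree_mul_of_isDomain hP0 hQ0] at h1
    rw [totalDegree_mul_of_isDomain hN0 hR0] at h2
    have h3 := totalDegree_sub_C_le N c
    have h4 := totalDegree_add P₀ 1
    rw [totalDegree_one] at h4
    simp at h4
    omega
  rw [totalDegree_eq_zero_iff_eq_C] at hdeg
  refine ⟨coeff 0 R, ?_, ?_⟩
  · intro h; rw [h, C_0] at hdeg; exact hR0 hdeg
  · rw [← hdeg]; linear_combination hR

/-- Restricting the equation of `P` to the line `v̄ = 0` gives `V ^ a + 1 = W ^ b` in a polynomial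
ring generated by the restrictions of `u` and `v`; this excludes `b ≥ 2`. -/
theorem b_eq_one (u v : MvPolynomial (Fin 2) ℂ)
    (huv : Algebra.adjoin ℂ {u, v} = ⊤)
    (a b : ℕ) (ha : 1 ≤ a) (hb : 1 ≤ b) (k : ℕ) (hk : 1 ≤ k)
    (g : Polynomial ℂ) (hg0 : Polynomial.eval 0 g = 1)
    (hndvd : ¬ v ∣ map (starRingEnd ℂ) v)
    (m : MvPolynomial (Fin 2) ℂ)
    (hP : v ^ a - (u * v ^ k + Polynomial.aeval v g) ^ b = m * map (starRingEnd ℂ) v - 1) :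
    b = 1 := by
  obtain ⟨φ, hu', hv', hker⟩ := exists_restriction _ _ (adjoin_conj u v huv)
  by_contra hb1
  have hφ := congrArg φ hP
  have hg' : φ (Polynomial.aeval v g) = g.comp (φ v) := by
    rw [← Polynomial.aeval_algHom_apply]; rfl
  simp only [map_sub, map_pow, map_add, map_mul, hv', mul_zero, map_one, hg'] at hφ
  have hd : φ v ∣ (φ u * φ v ^ k + g.comp (φ v)) - 1 := by
    have h1 : φ v ∣ g.comp (φ v) - 1 := by
      have h : Polynomial.X ∣ g - 1 := by
        rw [Polynomial.X_dvd_iff, Polynomial.coeff_zero_eq_eval_zero]; simp [hg0]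
      simpa using map_dvd (Polynomial.compRingHom (φ v)) h
    rw [add_sub_assoc]
    exact dvd_add ((dvd_pow_self _ (by omega)).mul_left _) h1
  obtain ⟨hV, hW⟩ := constants_of_pow_eq (φ v) _ a b ha (by omega)
    (by linear_combination hφ) hd
  rw [Polynomial.natDegree_eq_zero] at hV hW
  obtain ⟨c, hc⟩ := hV
  obtain ⟨w, hw⟩ := hW
  -- `c = 0` would mean `v̄ ∣ v`.
  have hc0 : c ≠ 0 := by
    rintro rfl
    have h1 := hker v (by rw [← hc, Polynomial.C_0])
    have h2 := map_dvd (map (starRingEnd ℂ)) h1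
    rw [conj_conj] at h2
    exact hndvd h2
  obtain ⟨d, hd⟩ : ∃ d, φ u = Polynomial.C d := by
    refine ⟨(w - g.eval c) * (c ^ k)⁻¹, ?_⟩
    rw [← hc, Polynomial.comp_C] at hw
    have h : (Polynomial.C c ^ k : Polynomial ℂ) * Polynomial.C (c ^ k)⁻¹ = 1 := by
      rw [← Polynomial.C_pow, ← Polynomial.C_mul, mul_inv_cancel₀ (pow_ne_zero _ hc0)]; simp
    rw [Polynomial.C_mul, Polynomial.C_sub, hw]
    linear_combination (-φ u) * h
  -- `φ` sends both generators to constants, so it takes only constant values, yet `φ ū = X`.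
  have key : φ = ((Algebra.ofId ℂ (Polynomial ℂ)).comp (Polynomial.aeval (0 : ℂ))).comp φ := by
    refine AlgHom.ext_of_adjoin_eq_top huv ?_
    rintro x (rfl | rfl)
    · simp [hd, Algebra.ofId_apply]
    · simp [← hc, Algebra.ofId_apply]
  have := DFunLike.congr_fun key (map (starRingEnd ℂ) u)
  simp [hu', Algebra.ofId_apply] at this

/-- Case `b = 1`. If `k ≥ 2`, then dividing the equation of `P` by `v` shows that `v̄` is congruent to a
constant modulo `v`; as `deg v̄ ≤ deg v`, it would then be an affine function of `v`, but it
involves `u`. -/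
theorem k_eq_one (u v : MvPolynomial (Fin 2) ℂ)
    (huv : Algebra.adjoin ℂ {u, v} = ⊤)
    (a : ℕ) (ha : 1 ≤ a) (k : ℕ) (hk : 1 ≤ k)
    (g : Polynomial ℂ) (hg0 : Polynomial.eval 0 g = 1)
    (lam : ℂ)
    (hP : v ^ a - (u * v ^ k + Polynomial.aeval v g) =
      C lam * (v * map (starRingEnd ℂ) v) - 1) :
    k = 1 := by
  by_contra hk1
  have hv0 := (prime_coord u v huv).ne_zero
  obtain ⟨p, hp⟩ : ∃ p : Polynomial ℂ, Polynomial.X ^ a - (g - 1) = Polynomial.X * p := by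
    have h : Polynomial.X ∣ g - 1 := by
      rw [Polynomial.X_dvd_iff, Polynomial.coeff_zero_eq_eval_zero]; simp [hg0]
    exact dvd_sub (dvd_pow_self _ (by omega)) h
  have hpv := congrArg (Polynomial.aeval v) hp
  simp only [map_sub, map_pow, map_mul, Polynomial.aeval_X, map_one] at hpv
  obtain ⟨j, rfl⟩ : ∃ j, k = j + 1 := ⟨k - 1, by omega⟩
  have hvb : C lam * map (starRingEnd ℂ) v = Polynomial.aeval v p - u * v ^ j := by
    apply mul_left_cancel₀ hv0
    linear_combination hpv - hP
  obtain ⟨t, ht⟩ : v ∣ C lam * map (starRingEnd ℂ) v - C (p.eval 0) := by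
    have h : Polynomial.X ∣ p - Polynomial.C (p.eval 0) := by
      rw [Polynomial.X_dvd_iff, Polynomial.coeff_zero_eq_eval_zero]; simp
    have h' := map_dvd (Polynomial.aeval v) h
    rw [map_sub, Polynomial.aeval_X, Polynomial.aeval_C, algebraMap_eq] at h'
    rw [hvb, sub_right_comm]
    exact dvd_sub h' ((dvd_pow_self v (by omega)).mul_left u)
  have hdeg : t.totalDegree = 0 := by
    by_cases ht0 : t = 0
    · simp [ht0]
    have h1 := congrArg totalDegree ht
    rw [totalDegree_mul_of_isDomain hv0 ht0] at h1
    have h2 := totalDegree_sub_C_le (C lam * map (starRingEnd ℂ) v) (p.eval 0)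
    have h3 := totalDegree_mul (C lam) (map (starRingEnd ℂ) v)
    have h4 : (map (starRingEnd ℂ) v).totalDegree ≤ v.totalDegree :=
      Finset.sup_mono (support_map_subset _ _)
    rw [totalDegree_C] at h3
    omega
  rw [totalDegree_eq_zero_iff_eq_C] at hdeg
  have h : ∀ s : ℂ, p.eval 1 - s = p.eval 0 + coeff 0 t := by
    intro s
    obtain ⟨ψ, hu', hv'⟩ := exists_algHom u v huv s 1
    have hC : ∀ m, ψ (C m) = m := fun m => ψ.commutes m
    have hp' : ψ (Polynomial.aeval v p) = p.eval 1 := by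
      rw [← Polynomial.aeval_algHom_apply, hv', Polynomial.coe_aeval_eq_eval]
    rw [hvb, hdeg] at ht
    have h := congrArg ψ ht
    simp only [map_sub, map_mul, map_pow, hC, hu', hv', hp', one_pow, mul_one, one_mul] at h
    linear_combination h
  have h0 := h 0
  have h1 := h 1
  exact one_ne_zero (α := ℂ) (by linear_combination h0 - h1)

/-- Very good asymptote, form (i.1): if `P = vᵃ − (uvᵏ + g(v))ᵇ` has real coefficients and
`(A/PA)* = ℝ*`, then `b = k = 1` and `P` defines the standard embedding of `S¹` in `ℝ²`. -/
theorem stmt_1 (u v : MvPolynomial (Fin 2) ℂ)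
    (huv : Algebra.adjoin ℂ {u, v} = ⊤)
    (a b : ℕ) (ha : 1 ≤ a) (hb : 1 ≤ b) (hab : Nat.Coprime a b)
    (k : ℕ) (hk : 1 ≤ k)
    (g : Polynomial ℂ) (hgdeg : g.natDegree ≤ k - 1) (hg0 : Polynomial.eval 0 g = 1)
    (P : MvPolynomial (Fin 2) ℂ)
    (hP : P = v ^ a - (u * v ^ k + Polynomial.aeval v g) ^ b)
    (P₀ : MvPolynomial (Fin 2) ℝ)
    (hP₀ : MvPolynomial.map (algebraMap ℝ ℂ) P₀ = P)
    (hunits : ∀ w : (MvPolynomial (Fin 2) ℝ ⧸ Ideal.span {P₀})ˣ,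
      ∃ r : ℝ, r ≠ 0 ∧ (w : MvPolynomial (Fin 2) ℝ ⧸ Ideal.span {P₀}) =
        algebraMap ℝ (MvPolynomial (Fin 2) ℝ ⧸ Ideal.span {P₀}) r) :
    b = 1 ∧ k = 1 ∧
      ∃ v₁ v₂ : MvPolynomial (Fin 2) ℝ,
        v = MvPolynomial.map (algebraMap ℝ ℂ) v₁ +
            MvPolynomial.C Complex.I * MvPolynomial.map (algebraMap ℝ ℂ) v₂ ∧
        ∃ lam : ℝ, lam ≠ 0 ∧
          P₀ = MvPolynomial.C lam * (v₁ ^ 2 + v₂ ^ 2) - 1 ∧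
          Algebra.adjoin ℝ {v₁, v₂} = ⊤ := by
  obtain ⟨v₁, v₂, hv⟩ := exists_re_im v
  obtain ⟨hndvd, lam, hlam, hPN⟩ := real_part u v huv a b ha hb k hk g hg0 P₀ v₁ v₂
    (hP₀.trans hP) hunits hv
  have hvbar : map (starRingEnd ℂ) v =
      map (algebraMap ℝ ℂ) v₁ - C Complex.I * map (algebraMap ℝ ℂ) v₂ := by
    rw [hv]
    simp only [map_add, map_mul, conj_real, map_C, Complex.conj_I, C_neg]
    ring
  have heq : v ^ a - (u * v ^ k + Polynomial.aeval v g) ^ b =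
      C (lam : ℂ) * (v * map (starRingEnd ℂ) v) - 1 := by
    have hI : (C Complex.I : MvPolynomial (Fin 2) ℂ) * C Complex.I = -1 := by
      rw [← C_mul, Complex.I_mul_I]; simp
    rw [← hP, ← hP₀, hPN, hvbar, hv]
    simp only [map_sub, map_mul, map_add, map_pow, map_C, map_one, Complex.coe_algebraMap]
    linear_combination (C (lam : ℂ) * map (algebraMap ℝ ℂ) v₂ ^ 2) * hI
  obtain rfl := b_eq_one u v huv a b ha hb k hk g hg0 hndvd (C (lam : ℂ) * v)
    (by rw [heq]; ring)
  rw [pow_one] at heq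
  obtain rfl := k_eq_one u v huv a ha k hk g hg0 lam heq
  refine ⟨rfl, rfl, v₁, v₂, hv, lam, hlam, hPN, ?_⟩
  have hg1 : g = 1 := by
    rw [Polynomial.eq_C_of_natDegree_le_zero hgdeg, Polynomial.coeff_zero_eq_eval_zero, hg0,
      Polynomial.C_1]
  have hu : u = v ^ (a - 1) - C (lam : ℂ) * map (starRingEnd ℂ) v := by
    apply mul_left_cancel₀ (prime_coord u v huv).ne_zero
    rw [hg1, map_one, pow_one] at heq
    have : v ^ a = v * v ^ (a - 1) := by rw [← pow_succ', Nat.sub_add_cancel ha]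
    rw [this] at heq
    linear_combination -heq
  have htop : Algebra.adjoin ℂ (map (algebraMap ℝ ℂ) '' {v₁, v₂}) = ⊤ := by
    have m1 : map (algebraMap ℝ ℂ) v₁ ∈ Algebra.adjoin ℂ (map (algebraMap ℝ ℂ) '' {v₁, v₂}) :=
      Algebra.subset_adjoin ⟨v₁, by simp, rfl⟩
    have m2 : map (algebraMap ℝ ℂ) v₂ ∈ Algebra.adjoin ℂ (map (algebraMap ℝ ℂ) '' {v₁, v₂}) :=
      Algebra.subset_adjoin ⟨v₂, by simp, rfl⟩
    have mC : ∀ z : ℂ, (C z : MvPolynomial (Fin 2) ℂ) ∈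
        Algebra.adjoin ℂ (map (algebraMap ℝ ℂ) '' {v₁, v₂}) := fun z => algebraMap_mem _ z
    have mv : v ∈ Algebra.adjoin ℂ (map (algebraMap ℝ ℂ) '' {v₁, v₂}) := by
      rw [hv]; exact add_mem m1 (mul_mem (mC _) m2)
    rw [eq_top_iff, ← huv]
    refine Algebra.adjoin_le ?_
    rintro x (rfl | rfl)
    · rw [hu, hvbar]
      exact sub_mem (pow_mem mv _) (mul_mem (mC _) (sub_mem m1 (mul_mem (mC _) m2)))
    · exact mv
  rw [eq_top_iff]
  rintro x -
  obtain ⟨p, hp, q, -, h⟩ := decompose {v₁, v₂} (map (algebraMap ℝ ℂ) x)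
    (by rw [htop]; trivial)
  rw [re_eq x p q h]
  exact hp
end

section
/- Suppose u, v ∈ B = ℂ[x,y] generate B as a ℂ-algebra. Let b > a ≥ 1 be relatively prime integers, let k ≥ 1, let g be a univariate polynomial over ℂ of degree at most k−2 (g = 0 when k = 1), and set P = 1 − v^{b−a}·(u·v^{k−1} + g(v))ᵇ. If all coefficients of P are real (so P ∈ A = ℝ[x,y]), then some unit of the quotient ring A/PA is not the residue class of a real constant (i.e., (A/PA)* ≠ ℝ*). -/
/-!
The generators `u, v` are the images of the coordinates under a surjective endomorphism of
`ℂ[x,y]`, which is injective because the ring is Noetherian. Hence `v` is prime, and values of `u`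
and `v` at a common point can be prescribed arbitrarily.

Let `F = u v ^ (k - 1) + g(v)`, `R = 1 - P = v ^ (b - a) F ^ b`, and let `σ` be coefficientwise
conjugation. Since `σ R = R`, the primes `v` and `σ v` divide `R` to the same order. If they were
not associated, the first order would be congruent to `b - a` modulo `b` and the second to `0`, so
`b` would divide `a`, which is impossible. So `σ v = λ v` with `λ ∈ ℂ`, and a nonzero scalar
multiple `c v` is real. It divides the real polynomial `R`, and the quotient is real as well; as
`R ≡ 1` modulo `P`, the class of `c v` is a unit of `A/PA`. It is not a constant: the curve `P = 0`
has points with `v = 1` and with `v = 2`.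
-/

open MvPolynomial

/-- The ascending chain `ker φ ^ n` stabilises. -/
lemma injective_of_surjective_ringEndo {S : Type*} [CommRing S] [IsNoetherianRing S]
    (f : S →+* S) (hf : Function.Surjective f) : Function.Injective f := by
  have hmono : Monotone (fun n : ℕ => RingHom.ker (f ^ n)) := by
    refine monotone_nat_of_le_succ fun n x hx => ?_
    simp only [RingHom.mem_ker] at hx ⊢
    rw [pow_succ', RingHom.mul_def, RingHom.comp_apply, hx, map_zero]
  obtain ⟨n, hn⟩ := monotone_stabilizes_iff_noetherian.mpr
    (inferInstance : IsNoetherianRing S) ⟨_, hmono⟩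
  have hs : Function.Surjective (f ^ n) := by
    rw [RingHom.coe_pow]
    exact hf.iterate n
  rw [injective_iff_map_eq_zero]
  intro x hx
  obtain ⟨y, rfl⟩ := hs x
  have h1 : y ∈ RingHom.ker (f ^ (n + 1)) := by
    rw [RingHom.mem_ker, pow_succ', RingHom.mul_def, RingHom.comp_apply, hx]
  have h2 : RingHom.ker (f ^ n) = RingHom.ker (f ^ (n + 1)) := hn (n + 1) (Nat.le_succ n)
  rw [← h2] at h1
  exact h1

/-- Generators of the polynomial ring are the images of the coordinates under an automorphism. -/
lemma exists_coordinate_change (u v : MvPolynomial (Fin 2) ℂ)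
    (huv : Algebra.adjoin ℂ {u, v} = ⊤) :
    ∃ e : MvPolynomial (Fin 2) ℂ ≃ₐ[ℂ] MvPolynomial (Fin 2) ℂ, e (X 0) = u ∧ e (X 1) = v := by
  have hs : Function.Surjective (aeval ![u, v] : MvPolynomial (Fin 2) ℂ →ₐ[ℂ] _) := by
    rw [← AlgHom.range_eq_top, ← Algebra.adjoin_range_eq_range_aeval]
    simpa [Set.pair_comm] using huv
  have hi := injective_of_surjective_ringEndo
    (aeval ![u, v] : MvPolynomial (Fin 2) ℂ →ₐ[ℂ] _).toRingHom hs
  exact ⟨AlgEquiv.ofBijective (aeval ![u, v]) ⟨hi, hs⟩, by simp, by simp⟩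

/-- Coefficientwise complex conjugation. -/
noncomputable def conjPoly : MvPolynomial (Fin 2) ℂ ≃+* MvPolynomial (Fin 2) ℂ :=
  mapEquiv (Fin 2) (starRingAut : RingAut ℂ)

lemma coeff_conjPoly (p : MvPolynomial (Fin 2) ℂ) (m : Fin 2 →₀ ℕ) :
    coeff m (conjPoly p) = (starRingEnd ℂ) (coeff m p) := by
  simp only [conjPoly, mapEquiv_apply, coeff_map]
  rfl

lemma conjPoly_conjPoly (p : MvPolynomial (Fin 2) ℂ) : conjPoly (conjPoly p) = p := by
  ext m
  simp [coeff_conjPoly]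

lemma conjPoly_map (p : MvPolynomial (Fin 2) ℝ) :
    conjPoly (map (algebraMap ℝ ℂ) p) = map (algebraMap ℝ ℂ) p := by
  ext m
  simp [coeff_conjPoly, coeff_map]

lemma conjPoly_C (c : ℂ) : conjPoly (C c) = C ((starRingEnd ℂ) c) := by
  simp only [conjPoly, mapEquiv_apply, map_C]
  rfl

lemma exists_map_eq_of_conjPoly_eq {p : MvPolynomial (Fin 2) ℂ} (hp : conjPoly p = p) :
    ∃ q : MvPolynomial (Fin 2) ℝ, map (algebraMap ℝ ℂ) q = p := by
  have : p ∈ Set.range (MvPolynomial.map (σ := Fin 2) (algebraMap ℝ ℂ)) := by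
    rw [mem_range_map_iff_coeffs_subset]
    intro c hc
    obtain ⟨m, -, rfl⟩ := mem_coeffs_iff.mp hc
    have h : (starRingEnd ℂ) (coeff m p) = coeff m p := by
      rw [← coeff_conjPoly, hp]
    obtain ⟨r, hr⟩ := Complex.conj_eq_iff_real.mp h
    exact ⟨r, hr.symm⟩
  exact this

/-- If `σ` fixes `v ^ m * F ^ b` with `b ∤ m`, comparing the multiplicities of the primes `v` and
`σ v` modulo `b` shows that they are associated. -/
lemma associated_of_fixed {S : Type*} [CommRing S] [IsDomain S] [IsNoetherianRing S]
    (σ : S ≃+* S) {v F : S} (hv : Prime v) {m b : ℕ} (hb0 : b ≠ 0) (hb : ¬ b ∣ m)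
    (hR : v ^ m * F ^ b ≠ 0) (hσ : σ (v ^ m * F ^ b) = v ^ m * F ^ b) :
    Associated v (σ v) := by
  by_contra hna
  have hv' : Prime (σ v) := (MulEquiv.prime_iff σ).mpr hv
  have hF : F ≠ 0 := by
    rintro rfl
    simp [hb0] at hR
  have h1 := emultiplicity_map_eq σ (a := v) (b := v ^ m * F ^ b)
  rw [hσ, emultiplicity_mul hv', emultiplicity_mul hv, emultiplicity_pow hv', emultiplicity_pow hv,
    emultiplicity_pow hv', emultiplicity_pow hv] at h1
  have h2 : emultiplicity (σ v) v = 0 :=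
    emultiplicity_eq_zero.mpr fun h => hna (hv'.associated_of_dvd hv h).symm
  rw [h2, (FiniteMultiplicity.of_prime_left hv hv.ne_zero).emultiplicity_self,
    (FiniteMultiplicity.of_prime_left hv hF).emultiplicity_eq_multiplicity,
    (FiniteMultiplicity.of_prime_left hv' hF).emultiplicity_eq_multiplicity] at h1
  norm_cast at h1
  simp only [mul_zero, zero_add, mul_one] at h1
  exact hb ((Nat.dvd_add_left (dvd_mul_right b _)).mp (h1 ▸ dvd_mul_right b _))

/-- If the conjugate of `v` is associated to `v`, a nonzero multiple of `v` is real: one of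
`v + σ v` and `I * (v - σ v)`. -/
lemma exists_real_multiple {v : MvPolynomial (Fin 2) ℂ} (h : Associated v (conjPoly v)) :
    ∃ c : ℂ, c ≠ 0 ∧ conjPoly (C c * v) = C c * v := by
  obtain ⟨w, hw⟩ := h
  obtain ⟨l, -, hl⟩ := MvPolynomial.isUnit_iff_eq_C_of_isReduced.mp w.isUnit
  rw [hl] at hw
  have h2 : conjPoly (v * C l) = v := by rw [hw, conjPoly_conjPoly]
  have h3 : C ((starRingEnd ℂ) l) * (v * C l) = v := by
    rw [map_mul, conjPoly_C, ← hw] at h2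
    linear_combination h2
  by_cases h1 : l = -1
  · refine ⟨Complex.I, Complex.I_ne_zero, ?_⟩
    rw [map_mul, conjPoly_C, ← hw, h1]
    simp
  · refine ⟨1 + l, fun h => h1 (by linear_combination h), ?_⟩
    rw [map_mul, conjPoly_C, ← hw]
    simp only [map_add, map_one]
    linear_combination h3

/-- Divisibility between real polynomials descends from `ℂ` to `ℝ`. -/
lemma dvd_of_map_dvd {p q : MvPolynomial (Fin 2) ℝ} (hp : p ≠ 0)
    (h : map (algebraMap ℝ ℂ) p ∣ map (algebraMap ℝ ℂ) q) : p ∣ q := by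
  have hinj : Function.Injective (map (σ := Fin 2) (algebraMap ℝ ℂ)) :=
    map_injective _ (algebraMap ℝ ℂ).injective
  obtain ⟨Q, hQ⟩ := h
  have hp' : map (algebraMap ℝ ℂ) p ≠ 0 := fun h => hp (hinj (by rw [h, map_zero]))
  have hQ' := congrArg conjPoly hQ
  rw [map_mul, conjPoly_map, conjPoly_map, hQ] at hQ'
  obtain ⟨Q₀, rfl⟩ := exists_map_eq_of_conjPoly_eq (mul_left_cancel₀ hp' hQ').symm
  exact ⟨Q₀, hinj (by rw [hQ, map_mul])⟩

theorem stmt_2 (u v : MvPolynomial (Fin 2) ℂ)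
    (huv : Algebra.adjoin ℂ {u, v} = ⊤)
    (a b : ℕ) (ha : 1 ≤ a) (hab' : a < b) (hab : Nat.Coprime a b)
    (k : ℕ) (hk : 1 ≤ k)
    (g : Polynomial ℂ) (hgdeg : g.natDegree ≤ k - 2) (hg1 : k = 1 → g = 0)
    (P : MvPolynomial (Fin 2) ℂ)
    (hP : P = 1 - v ^ (b - a) * (u * v ^ (k - 1) + Polynomial.aeval v g) ^ b)
    (P₀ : MvPolynomial (Fin 2) ℝ)
    (hP₀ : MvPolynomial.map (algebraMap ℝ ℂ) P₀ = P) :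
    ∃ w : (MvPolynomial (Fin 2) ℝ ⧸ Ideal.span {P₀})ˣ,
      ∀ r : ℝ, (w : MvPolynomial (Fin 2) ℝ ⧸ Ideal.span {P₀}) ≠
        algebraMap ℝ (MvPolynomial (Fin 2) ℝ ⧸ Ideal.span {P₀}) r := by
  obtain ⟨e, rfl, rfl⟩ := exists_coordinate_change u v huv
  set v := e (X 1) with hv_def
  set F := e (X 0) * v ^ (k - 1) + Polynomial.aeval v g with hF
  have hv : Prime v := (MulEquiv.prime_iff e).mpr ((X_prime))
  -- The curve `P = 0` has a point over every nonzero value of `v`.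
  have hpt : ∀ t : ℂ, t ≠ 0 → ∃ φ : MvPolynomial (Fin 2) ℂ →ₐ[ℂ] ℂ, φ v = t ∧ φ P = 0 := by
    intro t ht
    obtain ⟨z, hz⟩ := IsAlgClosed.exists_pow_nat_eq ((t ^ (b - a))⁻¹) (n := b) (by omega)
    let φ : MvPolynomial (Fin 2) ℂ →ₐ[ℂ] ℂ :=
      (aeval ![(z - g.eval t) / t ^ (k - 1), t]).comp e.symm.toAlgHom
    have h1 : φ v = t := by simp [φ, hv_def]
    have h0 : φ (e (X 0)) = (z - g.eval t) / t ^ (k - 1) := by simp [φ]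
    have h2 : φ F = z := by
      rw [hF, map_add, map_mul, map_pow, ← Polynomial.aeval_algHom_apply, h1, h0,
        Polynomial.coe_aeval_eq_eval]
      field_simp
      ring
    refine ⟨φ, h1, ?_⟩
    rw [hP, map_sub, map_mul, map_pow, map_pow, h1, h2, hz, map_one,
      mul_inv_cancel₀ (pow_ne_zero _ ht), sub_self]
  have hRmap : v ^ (b - a) * F ^ b = map (algebraMap ℝ ℂ) (1 - P₀) := by
    rw [map_sub, map_one, hP₀, hP]
    ring
  have hR0 : v ^ (b - a) * F ^ b ≠ 0 := by
    intro h
    obtain ⟨φ, -, hφ⟩ := hpt 1 one_ne_zero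
    rw [hP, h] at hφ
    simp at hφ
  have hbm : ¬ b ∣ b - a := fun h => by
    have := Nat.le_of_dvd (by omega) h
    omega
  have hassoc : Associated v (conjPoly v) :=
    associated_of_fixed conjPoly hv (by omega) hbm hR0 (by rw [hRmap, conjPoly_map])
  obtain ⟨c, hc, hreal⟩ := exists_real_multiple hassoc
  obtain ⟨w₀, hw₀⟩ := exists_map_eq_of_conjPoly_eq hreal
  have hCc : IsUnit (C c : MvPolynomial (Fin 2) ℂ) := (IsUnit.mk0 c hc).map C
  have hw₀0 : w₀ ≠ 0 := by
    rintro rfl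
    rw [map_zero] at hw₀
    exact mul_ne_zero hCc.ne_zero hv.ne_zero hw₀.symm
  obtain ⟨q, hq⟩ : w₀ ∣ 1 - P₀ := by
    apply dvd_of_map_dvd hw₀0
    rw [hw₀, ← hRmap]
    exact hCc.mul_left_dvd.mpr (dvd_mul_of_dvd_left (dvd_pow_self v (by omega)) _)
  have hunit : (Ideal.Quotient.mk (Ideal.span {P₀}) w₀) * Ideal.Quotient.mk _ q = 1 := by
    rw [← map_mul, ← hq, ← map_one (Ideal.Quotient.mk (Ideal.span {P₀})), Ideal.Quotient.eq]
    rw [Ideal.mem_span_singleton]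
    exact ⟨-1, by ring⟩
  refine ⟨Units.mkOfMulEqOne _ _ hunit, fun r hr => ?_⟩
  have hr' : Ideal.Quotient.mk (Ideal.span {P₀}) w₀ = Ideal.Quotient.mk _ (C r) := hr
  rw [Ideal.Quotient.eq, Ideal.mem_span_singleton] at hr'
  obtain ⟨s, hs⟩ := hr'
  have hs' := congrArg (map (algebraMap ℝ ℂ)) hs
  rw [map_sub, map_mul, hw₀, hP₀, map_C] at hs'
  have hval : ∀ t : ℂ, t ≠ 0 → c * t = r := by
    intro t ht
    obtain ⟨φ, h1, h2⟩ := hpt t ht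
    have h3 := congrArg φ hs'
    have hC : ∀ d : ℂ, φ (C d) = d := fun d => φ.commutes d
    rw [map_sub, map_mul, map_mul, h1, h2, hC, hC, zero_mul] at h3
    exact sub_eq_zero.mp h3
  have e1 := hval 1 one_ne_zero
  have e2 := hval 2 two_ne_zero
  exact hc (by linear_combination e2 - e1)
end

section
/- Suppose u, v ∈ B = ℂ[x,y] generate B as a ℂ-algebra. Let s, p, k ≥ 1 be integers with sp ≥ 2, let g be a univariate polynomial over ℂ of degree at most k−1 with g(0) = 1, set F = u·vᵏ + g(v), and suppose P ∈ B satisfies vᵏ·P = (v + Fˢ)ᵖ − F^{sp−1}. If all coefficients of P are real (so P ∈ A = ℝ[x,y]), then some unit of the quotient ring A/PA is not the residue class of a real constant (i.e., (A/PA)* ≠ ℝ*). -/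
/-!
Write `σ` for coefficientwise complex conjugation on `ℂ[x, y]`, let `a, b ≥ 1` be the total
degrees of `u, v`, and put `d = a + k b`, the degree of `F`.

Suppose every unit of `A/PA` is a real constant. If `T` is invertible modulo `P` in `B`, then
`T σ(T)` is real and a unit modulo `P`, so `P ∣ T σ(T) - c` for some real `c`
(`exists_dvd_mul_conj_sub_C`). A comparison of total degrees contradicts this.

* `sp ≥ 3`, with `T = F`. Since `F ≡ 1` modulo `v`, the relation defining `P` makes `F` invertible
  modulo `P`. But `deg P = s p d - k b ≥ 3 d - k b > 2 d = deg (F σ(F) - c)`.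
* `sp = 2`. Here `P` is given by `vᵏ P = T² - T + v` with `T = F` (if `s = 2`) or `T = v + F`
  (if `s = 1`), and `T = u vᵏ + h(v)` with `deg h ≤ k`, `h(0) = 1`. Writing `T = 1 - v m` one gets
  `T m ≡ 1` modulo `P` with `deg m ≤ a + (k - 1) b`. As `P` is real, `σ(m)` inverts `σ(T)`, so
  `P ∣ T - c σ(m)`. The right side has degree exactly `d`, while `deg P = 2 d - k b = d + a > d`.

That `u` and `v` are not constant follows from the Krull dimension of `ℂ[x, y]` being `2`
(`totalDegree_pos_of_adjoin`).
-/

open MvPolynomial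

/-- Complex conjugation of the coefficients of a polynomial in two variables. -/
noncomputable def conjCoeff : MvPolynomial (Fin 2) ℂ →+* MvPolynomial (Fin 2) ℂ :=
  MvPolynomial.map (starRingEnd ℂ)

lemma conjCoeff_conjCoeff (f : MvPolynomial (Fin 2) ℂ) : conjCoeff (conjCoeff f) = f := by
  ext m
  simp [conjCoeff, coeff_map]

lemma conjCoeff_map (f : MvPolynomial (Fin 2) ℝ) :
    conjCoeff (MvPolynomial.map (algebraMap ℝ ℂ) f) = MvPolynomial.map (algebraMap ℝ ℂ) f := by
  ext m
  simp [conjCoeff, coeff_map]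

lemma totalDegree_conjCoeff (f : MvPolynomial (Fin 2) ℂ) :
    (conjCoeff f).totalDegree = f.totalDegree := by
  unfold totalDegree conjCoeff
  rw [support_map_of_injective _ (starRingEnd ℂ).injective]

lemma exists_map_eq_of_conjCoeff_eq {f : MvPolynomial (Fin 2) ℂ} (hf : conjCoeff f = f) :
    ∃ f₀ : MvPolynomial (Fin 2) ℝ, MvPolynomial.map (algebraMap ℝ ℂ) f₀ = f := by
  have h : f ∈ Set.range (MvPolynomial.map (σ := Fin 2) (algebraMap ℝ ℂ)) := by
    rw [mem_range_map_iff_coeffs_subset]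
    intro z hz
    obtain ⟨m, -, rfl⟩ := mem_coeffs_iff.1 hz
    have h1 : (starRingEnd ℂ) (coeff m f) = coeff m f := by
      conv_rhs => rw [← hf]
      simp [conjCoeff, coeff_map]
    exact ⟨_, (Complex.conj_eq_iff_re.1 h1)⟩
  exact h

/-- Divisibility of real polynomials descends from `ℂ[x, y]` to `ℝ[x, y]`. -/
lemma dvd_of_map_dvd_map {P₀ Z₀ : MvPolynomial (Fin 2) ℝ}
    (h : MvPolynomial.map (algebraMap ℝ ℂ) P₀ ∣ MvPolynomial.map (algebraMap ℝ ℂ) Z₀) :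
    P₀ ∣ Z₀ := by
  have hinj := map_injective (σ := Fin 2) (algebraMap ℝ ℂ) (algebraMap ℝ ℂ).injective
  obtain ⟨H, hH⟩ := h
  by_cases hP : MvPolynomial.map (algebraMap ℝ ℂ) P₀ = 0
  · rw [hP, zero_mul] at hH
    rw [hinj (hH.trans (map_zero _).symm)]
    exact dvd_zero _
  · -- the quotient of two conjugation-invariant polynomials is conjugation-invariant
    have h1 : conjCoeff H = H := by
      have h2 := congrArg conjCoeff hH
      rw [map_mul, conjCoeff_map, conjCoeff_map, hH] at h2
      exact (mul_left_cancel₀ hP h2).symm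
    obtain ⟨H₀, rfl⟩ := exists_map_eq_of_conjCoeff_eq h1
    exact ⟨H₀, hinj (by rw [hH, map_mul])⟩

/-- If all units of `A/P₀A` are real constants and `T` is a unit modulo `P₀` over `ℂ`, then the
norm `T σ(T)` is congruent to a real constant modulo `P₀`. -/
lemma exists_dvd_mul_conj_sub_C {P₀ : MvPolynomial (Fin 2) ℝ}
    (hunits : ∀ w : (MvPolynomial (Fin 2) ℝ ⧸ Ideal.span {P₀})ˣ,
      ∃ r : ℝ, (w : MvPolynomial (Fin 2) ℝ ⧸ Ideal.span {P₀}) =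
        algebraMap ℝ (MvPolynomial (Fin 2) ℝ ⧸ Ideal.span {P₀}) r)
    {T m : MvPolynomial (Fin 2) ℂ}
    (hT : MvPolynomial.map (algebraMap ℝ ℂ) P₀ ∣ 1 - T * m) :
    ∃ c : ℂ, MvPolynomial.map (algebraMap ℝ ℂ) P₀ ∣ T * conjCoeff T - C c := by
  have hreal : ∀ f, conjCoeff (f * conjCoeff f) = f * conjCoeff f := fun f => by
    rw [map_mul, conjCoeff_conjCoeff, mul_comm]
  obtain ⟨N, hN⟩ := exists_map_eq_of_conjCoeff_eq (hreal T)
  obtain ⟨M, hM⟩ := exists_map_eq_of_conjCoeff_eq (hreal m)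
  have h1 : P₀ ∣ 1 - N * M := by
    apply dvd_of_map_dvd_map
    have h2 := map_dvd conjCoeff hT
    rw [conjCoeff_map, map_sub, map_one, map_mul] at h2
    rw [map_sub, map_one, map_mul, hN, hM]
    have h3 : (1 : MvPolynomial (Fin 2) ℂ) - T * conjCoeff T * (m * conjCoeff m)
        = (1 - T * m) + T * m * (1 - conjCoeff T * conjCoeff m) := by ring
    rw [h3]
    exact dvd_add hT (h2.mul_left _)
  have h4 : Ideal.Quotient.mk (Ideal.span {P₀}) N * Ideal.Quotient.mk (Ideal.span {P₀}) M = 1 := by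
    rw [← map_mul, ← map_one (Ideal.Quotient.mk (Ideal.span {P₀})), eq_comm, Ideal.Quotient.eq]
    exact Ideal.mem_span_singleton.2 h1
  obtain ⟨r, hr⟩ := hunits (Units.mkOfMulEqOne _ _ h4)
  have h5 : P₀ ∣ N - C r := by
    rw [← Ideal.mem_span_singleton, ← Ideal.Quotient.eq]
    exact hr
  refine ⟨algebraMap ℝ ℂ r, ?_⟩
  have h6 := map_dvd (MvPolynomial.map (algebraMap ℝ ℂ)) h5
  rwa [map_sub, hN, map_C] at h6

/-- A member of a generating pair of `ℂ[x, y]` is nonconstant: otherwise `ℂ[x, y]` would be a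
quotient of `ℂ[X]`, of Krull dimension `1`. -/
lemma totalDegree_pos_of_adjoin {u v : MvPolynomial (Fin 2) ℂ}
    (huv : Algebra.adjoin ℂ {u, v} = ⊤) : 0 < u.totalDegree := by
  rw [Nat.pos_iff_ne_zero]
  intro h
  rw [totalDegree_eq_zero_iff_eq_C] at h
  have h1 : Algebra.adjoin ℂ {v} = ⊤ := by
    rw [← top_le_iff, ← huv, Algebra.adjoin_le_iff]
    rintro z (rfl | rfl)
    · rw [h]
      exact Subalgebra.algebraMap_mem _ _
    · exact Algebra.subset_adjoin rfl
  have hsurj : Function.Surjective (Polynomial.aeval (R := ℂ) v) := by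
    rw [← AlgHom.range_eq_top, ← Algebra.adjoin_singleton_eq_range_aeval, h1]
  have h2 := ringKrullDim_le_of_surjective (Polynomial.aeval (R := ℂ) v).toRingHom hsurj
  rw [MvPolynomial.ringKrullDim_of_isNoetherianRing, Polynomial.ringKrullDim_of_isNoetherianRing,
    ringKrullDim_eq_zero_of_field, zero_add, zero_add, Nat.card_fin] at h2
  exact absurd h2 (by decide)

lemma totalDegree_aeval_le (v : MvPolynomial (Fin 2) ℂ) (h : Polynomial ℂ) :
    (Polynomial.aeval v h).totalDegree ≤ h.natDegree * v.totalDegree := by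
  rw [Polynomial.aeval_eq_sum_range]
  refine totalDegree_finsetSum_le fun i hi => ?_
  refine (totalDegree_smul_le _ _).trans ((totalDegree_pow _ _).trans ?_)
  exact Nat.mul_le_mul_right _ (Nat.lt_succ_iff.1 (Finset.mem_range.1 hi))

lemma ne_zero_of_totalDegree_pos {f : MvPolynomial (Fin 2) ℂ} (h : 0 < f.totalDegree) : f ≠ 0 := by
  rintro rfl
  simp at h

lemma totalDegree_pow_eq {f : MvPolynomial (Fin 2) ℂ} (hf : f ≠ 0) (n : ℕ) :
    (f ^ n).totalDegree = n * f.totalDegree := by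
  induction n with
  | zero => simp
  | succ n ih => rw [pow_succ, totalDegree_mul_of_isDomain (pow_ne_zero _ hf) hf, ih]; ring

lemma totalDegree_mul_pow_add_aeval {u v : MvPolynomial (Fin 2) ℂ} {k : ℕ} {h : Polynomial ℂ}
    (hu : 0 < u.totalDegree) (hv : 0 < v.totalDegree) (hh : h.natDegree ≤ k) :
    (u * v ^ k + Polynomial.aeval v h).totalDegree = u.totalDegree + k * v.totalDegree := by
  have hu0 := ne_zero_of_totalDegree_pos hu
  have hv0 := ne_zero_of_totalDegree_pos hv
  have h1 : (u * v ^ k).totalDegree = u.totalDegree + k * v.totalDegree := by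
    rw [totalDegree_mul_of_isDomain hu0 (pow_ne_zero _ hv0), totalDegree_pow_eq hv0]
  rw [totalDegree_add_eq_left_of_totalDegree_lt, h1]
  rw [h1]
  have := totalDegree_aeval_le v h
  have := Nat.mul_le_mul_right v.totalDegree hh
  omega

lemma aeval_eq_one_add {v : MvPolynomial (Fin 2) ℂ} {h : Polynomial ℂ}
    (h0 : Polynomial.eval 0 h = 1) :
    Polynomial.aeval v h = 1 + v * Polynomial.aeval v h.divX := by
  conv_lhs => rw [← Polynomial.divX_mul_X_add h]
  rw [Polynomial.coeff_zero_eq_eval_zero, h0]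
  simp
  ring

/-- The case `sp = 2`, in the common normal form `vᵏ P = T² - T + v`: here `T` is invertible modulo
the real polynomial `P`, but `T σ(T)` is not congruent to a constant, so `hunit` cannot hold. -/
lemma false_of_normal_form {u v T P : MvPolynomial (Fin 2) ℂ} {k : ℕ} {h : Polynomial ℂ}
    (hu : 0 < u.totalDegree) (hv : 0 < v.totalDegree) (hk : 1 ≤ k)
    (hh : h.natDegree ≤ k) (h0 : Polynomial.eval 0 h = 1)
    (hT : T = u * v ^ k + Polynomial.aeval v h)
    (hP : v ^ k * P = T * T - T + v) (hPreal : conjCoeff P = P)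
    (hunit : ∀ m, P ∣ 1 - T * m → ∃ c : ℂ, P ∣ T * conjCoeff T - C c) : False := by
  obtain ⟨k, rfl⟩ : ∃ j, k = j + 1 := ⟨k - 1, by omega⟩
  have hv0 := ne_zero_of_totalDegree_pos hv
  have hdT : T.totalDegree = u.totalDegree + (k + 1) * v.totalDegree := by
    rw [hT, totalDegree_mul_pow_add_aeval hu hv hh]
  have hT0 : T ≠ 0 := ne_zero_of_totalDegree_pos (by omega)
  set m := -(u * v ^ k + Polynomial.aeval v h.divX) with hm
  have hTm : T = 1 - v * m := by
    rw [hT, aeval_eq_one_add h0, hm]; ring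
  have hmd : m.totalDegree ≤ u.totalDegree + k * v.totalDegree := by
    rw [hm, totalDegree_neg]
    refine (totalDegree_add _ _).trans (max_le ?_ ?_)
    · exact (totalDegree_mul _ _).trans (by gcongr; exact totalDegree_pow _ _)
    · refine (totalDegree_aeval_le _ _).trans ?_
      rw [Polynomial.natDegree_divX_eq_natDegree_tsub_one]
      have : (h.natDegree - 1) * v.totalDegree ≤ k * v.totalDegree :=
        Nat.mul_le_mul_right _ (by omega)
      omega
  have hinv : P ∣ 1 - T * m := by
    refine ⟨v ^ k, mul_left_cancel₀ hv0 ?_⟩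
    have : v * (1 - T * m) = T * T - T + v := by
      have : v * m = 1 - T := by rw [hTm]; ring
      linear_combination (-T) * this
    rw [this, ← hP]; ring
  obtain ⟨c, hc⟩ := hunit m hinv
  have hinv' := map_dvd conjCoeff hinv
  rw [hPreal, map_sub, map_one, map_mul] at hinv'
  have hdvd : P ∣ T - C c * conjCoeff m := by
    have : T - C c * conjCoeff m
        = T * (1 - conjCoeff T * conjCoeff m) + conjCoeff m * (T * conjCoeff T - C c) := by ring
    rw [this]
    exact dvd_add (hinv'.mul_left _) (hc.mul_left _)
  have hk1 : (k + 1) * v.totalDegree = k * v.totalDegree + v.totalDegree := by ring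
  have hdeg : (T - C c * conjCoeff m).totalDegree = T.totalDegree := by
    rw [sub_eq_add_neg, totalDegree_add_eq_left_of_totalDegree_lt]
    rw [totalDegree_neg]
    have := totalDegree_mul (C c) (conjCoeff m)
    rw [totalDegree_C, totalDegree_conjCoeff] at this
    omega
  have hPdeg : P.totalDegree ≤ T.totalDegree := by
    rw [← hdeg]
    exact totalDegree_le_of_dvd_of_isDomain hdvd (ne_zero_of_totalDegree_pos (by omega))
  have hR : (T * T - T + v).totalDegree = 2 * T.totalDegree := by
    have h1 : (T * T).totalDegree = 2 * T.totalDegree := by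
      rw [totalDegree_mul_of_isDomain hT0 hT0]; ring
    rw [sub_add, sub_eq_add_neg, totalDegree_add_eq_left_of_totalDegree_lt, h1]
    rw [h1, totalDegree_neg]
    have := totalDegree_sub T v
    omega
  have hL := totalDegree_mul (v ^ (k + 1)) P
  rw [hP, hR, totalDegree_pow_eq hv0] at hL
  omega

theorem stmt_4 (u v : MvPolynomial (Fin 2) ℂ)
    (huv : Algebra.adjoin ℂ {u, v} = ⊤)
    (s p k : ℕ) (hs : 1 ≤ s) (hp : 1 ≤ p) (hk : 1 ≤ k) (hsp : 2 ≤ s * p)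
    (g : Polynomial ℂ) (hgdeg : g.natDegree ≤ k - 1) (hg0 : Polynomial.eval 0 g = 1)
    (F : MvPolynomial (Fin 2) ℂ) (hF : F = u * v ^ k + Polynomial.aeval v g)
    (P : MvPolynomial (Fin 2) ℂ)
    (hP : v ^ k * P = (v + F ^ s) ^ p - F ^ (s * p - 1))
    (P₀ : MvPolynomial (Fin 2) ℝ)
    (hP₀ : MvPolynomial.map (algebraMap ℝ ℂ) P₀ = P) :
    ∃ w : (MvPolynomial (Fin 2) ℝ ⧸ Ideal.span {P₀})ˣ,
      ∀ r : ℝ, (w : MvPolynomial (Fin 2) ℝ ⧸ Ideal.span {P₀}) ≠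
        algebraMap ℝ (MvPolynomial (Fin 2) ℝ ⧸ Ideal.span {P₀}) r := by
  by_contra! hunits
  have hunit : ∀ T m, P ∣ 1 - T * m → ∃ c : ℂ, P ∣ T * conjCoeff T - C c := by
    intro T m h
    rw [← hP₀] at h ⊢
    exact exists_dvd_mul_conj_sub_C hunits h
  have hPreal : conjCoeff P = P := by rw [← hP₀, conjCoeff_map]
  have hu := totalDegree_pos_of_adjoin huv
  have hv : 0 < v.totalDegree := totalDegree_pos_of_adjoin (by rwa [Set.pair_comm])
  have hv0 := ne_zero_of_totalDegree_pos hv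
  rcases hsp.eq_or_lt with h2 | h3
  · have hs2 : s ≤ 2 := Nat.le_of_dvd (by norm_num) ⟨p, h2⟩
    interval_cases s
    · obtain rfl : p = 2 := by omega
      refine false_of_normal_form (T := v + F) (h := g + Polynomial.X) hu hv hk ?_ ?_ ?_ ?_
        hPreal (hunit _)
      · refine (Polynomial.natDegree_add_le _ _).trans (max_le (by omega) ?_)
        rwa [Polynomial.natDegree_X]
      · simp [hg0]
      · rw [hF]; simp; ring
      · rw [hP]; norm_num; ring
    · obtain rfl : p = 1 := by omega
      refine false_of_normal_form (T := F) (h := g) hu hv hk (by omega) hg0 hF ?_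
        hPreal (hunit _)
      rw [hP]; norm_num; ring
  · have hdF : F.totalDegree = u.totalDegree + k * v.totalDegree := by
      rw [hF, totalDegree_mul_pow_add_aeval hu hv (by omega)]
    have hvk : v.totalDegree ≤ k * v.totalDegree := Nat.le_mul_of_pos_left _ hk
    have hF0 : F ≠ 0 := ne_zero_of_totalDegree_pos (by omega)
    -- `F ∣ 1 - v ^ p * n ^ p` and `F ∣ v ^ k * P - v ^ p`, so `F` is comaximal with `P`
    have hinv : ∃ m, P ∣ 1 - F * m := by
      obtain ⟨n, hn⟩ : ∃ n, F = 1 - v * n := by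
        obtain ⟨j, rfl⟩ : ∃ j, k = j + 1 := ⟨k - 1, by omega⟩
        refine ⟨-(u * v ^ j + Polynomial.aeval v g.divX), ?_⟩
        rw [hF, aeval_eq_one_add hg0]; ring
      have h1 : F ∣ 1 - (v * n) ^ p := by
        have := sub_dvd_pow_sub_pow 1 (v * n) p
        rwa [one_pow, ← hn] at this
      have h2 : F ∣ v ^ p - v ^ k * P := by
        have e1 : F ∣ (v + F ^ s) ^ p - v ^ p := by
          have := sub_dvd_pow_sub_pow (v + F ^ s) v p
          rw [add_sub_cancel_left] at this
          exact (dvd_pow_self F (by omega)).trans this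
        have e2 : F ∣ F ^ (s * p - 1) := dvd_pow_self F (by omega)
        rw [hP]
        have := dvd_sub e2 e1
        convert this using 1
        ring
      have h4 : F ∣ 1 - n ^ p * v ^ k * P := by
        have := dvd_add h1 (h2.mul_left (n ^ p))
        convert this using 1
        ring
      obtain ⟨m, hm⟩ := h4
      refine ⟨m, n ^ p * v ^ k, ?_⟩
      linear_combination hm
    obtain ⟨m, hm⟩ := hinv
    obtain ⟨c, hc⟩ := hunit F m hm
    have hconj0 : conjCoeff F ≠ 0 :=
      ne_zero_of_totalDegree_pos (by rw [totalDegree_conjCoeff]; omega)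
    have hdeg : (F * conjCoeff F - C c).totalDegree = 2 * F.totalDegree := by
      have h1 : (F * conjCoeff F).totalDegree = 2 * F.totalDegree := by
        rw [totalDegree_mul_of_isDomain hF0 hconj0, totalDegree_conjCoeff]; ring
      rw [sub_eq_add_neg, totalDegree_add_eq_left_of_totalDegree_lt, h1]
      rw [totalDegree_neg, totalDegree_C, h1]
      omega
    have hPdeg : P.totalDegree ≤ 2 * F.totalDegree := by
      rw [← hdeg]
      exact totalDegree_le_of_dvd_of_isDomain hc (ne_zero_of_totalDegree_pos (by omega))
    have hdvF : (v + F ^ s).totalDegree = s * F.totalDegree := by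
      rw [totalDegree_add_eq_right_of_totalDegree_lt, totalDegree_pow_eq hF0]
      rw [totalDegree_pow_eq hF0]
      have : F.totalDegree ≤ s * F.totalDegree := Nat.le_mul_of_pos_left _ hs
      omega
    have hvF0 : v + F ^ s ≠ 0 := ne_zero_of_totalDegree_pos (by
      rw [hdvF]; exact Nat.mul_pos hs (by omega))
    have hR : ((v + F ^ s) ^ p - F ^ (s * p - 1)).totalDegree = s * p * F.totalDegree := by
      have h1 : ((v + F ^ s) ^ p).totalDegree = s * p * F.totalDegree := by
        rw [totalDegree_pow_eq hvF0, hdvF]; ring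
      rw [sub_eq_add_neg, totalDegree_add_eq_left_of_totalDegree_lt, h1]
      rw [totalDegree_neg, totalDegree_pow_eq hF0, h1]
      exact Nat.mul_lt_mul_of_pos_right (by omega) (by omega)
    have hL := totalDegree_mul (v ^ k) P
    rw [hP, hR, totalDegree_pow_eq hv0] at hL
    have := Nat.mul_le_mul_right F.totalDegree h3
    omega
end
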